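/- For every LO program P, the denotation of the least fixpoint of the symbolic operator S_P equals the least fixpoint of the ground operator T_P: writing S_P↑ω = ⋃_{k≥0} S_P^k(∅), one has den(S_P↑ω) = lfp(T_P). -/

import Mathlib

/-- LO goals over a signature `σ`: atoms, ⊤, ⅋ (par) and & (with). -/
inductive Goal (σ : Type) : Type
  | atom : σ → Goal σ
  | top : Goal σ
  | par : Goal σ → Goal σ → Goal σ
  | wth : Goal σ → Goal σ → Goal σ
  deriving DecidableEq

variable {σ : Type} [DecidableEq σ] [Fintype σ]

/-- A fact: a finite multiset over the signature. -/
abbrev LOFact (σ : Type) := Multiset σ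

/-- A context: a finite multiset of goals. -/
abbrev Ctx (σ : Type) := Multiset (Goal σ)

/-- An LO program: a finite set of clauses `H ⊸ G`, a clause being represented by
the multiset ⟨H⟩ of atoms of its head together with its body goal. -/
abbrev LOProgram (σ : Type) := Finset (Multiset σ × Goal σ)

/-- LO provability `P ⇒ Δ`. -/
inductive LOProv (P : LOProgram σ) : Ctx σ → Prop
  | topR (Δ : Ctx σ) : LOProv P (Goal.top ::ₘ Δ)
  | parR (G₁ G₂ : Goal σ) (Δ : Ctx σ) :
      LOProv P (G₁ ::ₘ G₂ ::ₘ Δ) → LOProv P (Goal.par G₁ G₂ ::ₘ Δ)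
  | wthR (G₁ G₂ : Goal σ) (Δ : Ctx σ) :
      LOProv P (G₁ ::ₘ Δ) → LOProv P (G₂ ::ₘ Δ) → LOProv P (Goal.wth G₁ G₂ ::ₘ Δ)
  | bc (H : Multiset σ) (G : Goal σ) (A : LOFact σ) :
      (H, G) ∈ P → LOProv P (G ::ₘ A.map Goal.atom) →
      LOProv P (H.map Goal.atom + A.map Goal.atom)

/-- The satisfiability judgment `I ⊨ Δ[A]`. -/
inductive Sat (I : Set (LOFact σ)) : Ctx σ → LOFact σ → Prop
  | top (Δ : Ctx σ) (A : LOFact σ) : Sat I (Goal.top ::ₘ Δ) A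
  | fact (A A' : LOFact σ) : A + A' ∈ I → Sat I (A.map Goal.atom) A'
  | par (G₁ G₂ : Goal σ) (Δ : Ctx σ) (A : LOFact σ) :
      Sat I (G₁ ::ₘ G₂ ::ₘ Δ) A → Sat I (Goal.par G₁ G₂ ::ₘ Δ) A
  | wth (G₁ G₂ : Goal σ) (Δ : Ctx σ) (A : LOFact σ) :
      Sat I (G₁ ::ₘ Δ) A → Sat I (G₂ ::ₘ Δ) A → Sat I (Goal.wth G₁ G₂ ::ₘ Δ) A

/-- The immediate-consequence operator `T_P`. -/
def TP (P : LOProgram σ) (I : Set (LOFact σ)) : Set (LOFact σ) :=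
  { M | ∃ H G A, (H, G) ∈ P ∧ Sat I ({G} : Ctx σ) A ∧ M = H + A }

/-- The denotation (upward closure) of a set of facts. -/
def den (I : Set (LOFact σ)) : Set (LOFact σ) := { B : LOFact σ | ∃ A ∈ I, A ≤ B }

/-- The symbolic satisfiability judgment `I ⊩ Δ[A]`
(`B - A` is multiset difference, `A₁ ∪ A₂` is the multiset least upper bound). -/
inductive SSat (I : Set (LOFact σ)) : Ctx σ → LOFact σ → Prop
  | top (Δ : Ctx σ) : SSat I (Goal.top ::ₘ Δ) 0
  | fact (A B : LOFact σ) : B ∈ I → SSat I (A.map Goal.atom) (B - A)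
  | par (G₁ G₂ : Goal σ) (Δ : Ctx σ) (A : LOFact σ) :
      SSat I (G₁ ::ₘ G₂ ::ₘ Δ) A → SSat I (Goal.par G₁ G₂ ::ₘ Δ) A
  | wth (G₁ G₂ : Goal σ) (Δ : Ctx σ) (A₁ A₂ : LOFact σ) :
      SSat I (G₁ ::ₘ Δ) A₁ → SSat I (G₂ ::ₘ Δ) A₂ →
      SSat I (Goal.wth G₁ G₂ ::ₘ Δ) (A₁ ∪ A₂)

/-- The symbolic fixpoint operator `S_P`. -/
def SP (P : LOProgram σ) (I : Set (LOFact σ)) : Set (LOFact σ) :=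
  { M | ∃ H G A, (H, G) ∈ P ∧ SSat I ({G} : Ctx σ) A ∧ M = H + A }

theorem Sat.mono' {I J : Set (LOFact σ)} (h : I ⊆ J) {Δ : Ctx σ} {A : LOFact σ}
    (hs : Sat I Δ A) : Sat J Δ A := by
  induction hs with
  | top Δ A => exact Sat.top Δ A
  | fact A A' hA => exact Sat.fact A A' (h hA)
  | par G₁ G₂ Δ A _ ih => exact Sat.par _ _ _ _ ih
  | wth G₁ G₂ Δ A _ _ ih₁ ih₂ => exact Sat.wth _ _ _ _ ih₁ ih₂

theorem SSat.mono' {I J : Set (LOFact σ)} (h : I ⊆ J) {Δ : Ctx σ} {A : LOFact σ}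
    (hs : SSat I Δ A) : SSat J Δ A := by
  induction hs with
  | top Δ => exact SSat.top Δ
  | fact A B hB => exact SSat.fact A B (h hB)
  | par G₁ G₂ Δ A _ ih => exact SSat.par _ _ _ _ ih
  | wth G₁ G₂ Δ A₁ A₂ _ _ ih₁ ih₂ => exact SSat.wth _ _ _ _ _ ih₁ ih₂

theorem SSat.sound {I : Set (LOFact σ)} {Δ : Ctx σ} {A : LOFact σ}
    (hs : SSat I Δ A) : ∀ B, A ≤ B → Sat (den I) Δ B := by
  induction hs with
  | top Δ => intro B _; exact Sat.top Δ B
  | fact A C hC => intro B hB; exact Sat.fact A B ⟨C, hC, tsub_le_iff_left.mp hB⟩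
  | par G₁ G₂ Δ A _ ih => intro B hB; exact Sat.par _ _ _ _ (ih B hB)
  | wth G₁ G₂ Δ A₁ A₂ _ _ ih₁ ih₂ =>
    intro B hB
    exact Sat.wth _ _ _ _ (ih₁ B (le_trans Multiset.le_union_left hB))
      (ih₂ B (le_trans Multiset.le_union_right hB))

theorem Sat.complete {I : Set (LOFact σ)} {Δ : Ctx σ} {B : LOFact σ}
    (hs : Sat (den I) Δ B) : ∃ A, A ≤ B ∧ SSat I Δ A := by
  induction hs with
  | top Δ B => exact ⟨0, Multiset.zero_le _, SSat.top Δ⟩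
  | fact A B hB =>
    obtain ⟨C, hC, hle⟩ := hB
    exact ⟨C - A, tsub_le_iff_left.mpr hle, SSat.fact A C hC⟩
  | par G₁ G₂ Δ A _ ih =>
    obtain ⟨A, hA, h⟩ := ih
    exact ⟨A, hA, SSat.par _ _ _ _ h⟩
  | wth G₁ G₂ Δ A _ _ ih₁ ih₂ =>
    obtain ⟨A₁, hA₁, h₁⟩ := ih₁
    obtain ⟨A₂, hA₂, h₂⟩ := ih₂
    exact ⟨A₁ ∪ A₂, Multiset.union_le hA₁ hA₂, SSat.wth _ _ _ _ _ h₁ h₂⟩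

theorem SSat.cont {I : ℕ → Set (LOFact σ)} (hI : Monotone I) {Δ : Ctx σ} {A : LOFact σ}
    (hs : SSat (⋃ k, I k) Δ A) : ∃ k, SSat (I k) Δ A := by
  induction hs with
  | top Δ => exact ⟨0, SSat.top Δ⟩
  | fact A B hB =>
    obtain ⟨k, hk⟩ := Set.mem_iUnion.mp hB
    exact ⟨k, SSat.fact A B hk⟩
  | par G₁ G₂ Δ A _ ih =>
    obtain ⟨k, h⟩ := ih
    exact ⟨k, SSat.par _ _ _ _ h⟩
  | wth G₁ G₂ Δ A₁ A₂ _ _ ih₁ ih₂ =>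
    obtain ⟨k, h₁⟩ := ih₁
    obtain ⟨l, h₂⟩ := ih₂
    exact ⟨max k l, SSat.wth _ _ _ _ _ (h₁.mono' (hI (le_max_left k l)))
      (h₂.mono' (hI (le_max_right k l)))⟩

theorem TP_mono' (P : LOProgram σ) : Monotone (TP P) := by
  rintro I J h M ⟨H, G, A, hP, hs, rfl⟩
  exact ⟨H, G, A, hP, hs.mono' h, rfl⟩

theorem SP_mono' (P : LOProgram σ) : Monotone (SP P) := by
  rintro I J h M ⟨H, G, A, hP, hs, rfl⟩
  exact ⟨H, G, A, hP, hs.mono' h, rfl⟩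

theorem TP_den (P : LOProgram σ) (I : Set (LOFact σ)) : TP P (den I) = den (SP P I) := by
  ext M
  constructor
  · rintro ⟨H, G, B, hP, hs, rfl⟩
    obtain ⟨A, hA, h⟩ := hs.complete
    exact ⟨H + A, ⟨H, G, A, hP, h, rfl⟩, add_le_add_right hA H⟩
  · rintro ⟨N, ⟨H, G, A, hP, hs, rfl⟩, hle⟩
    obtain ⟨C, rfl⟩ := Multiset.le_iff_exists_add.mp hle
    exact ⟨H, G, A + C, hP, hs.sound _ (Multiset.le_add_right A C), add_assoc _ _ _⟩

theorem SP_iter_mono (P : LOProgram σ) : Monotone (fun k => (SP P)^[k] ∅) :=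
  (SP_mono' P).monotone_iterate_of_le_map (Set.empty_subset _)

theorem SP_union (P : LOProgram σ) :
    SP P (⋃ k, (SP P)^[k] ∅) = ⋃ k, (SP P)^[k] ∅ := by
  apply Set.Subset.antisymm
  · rintro M ⟨H, G, A, hP, hs, rfl⟩
    obtain ⟨k, hk⟩ := SSat.cont (SP_iter_mono P) hs
    refine Set.mem_iUnion.mpr ⟨k + 1, ?_⟩
    rw [Function.iterate_succ_apply']
    exact ⟨H, G, A, hP, hk, rfl⟩
  · refine Set.iUnion_subset fun k => ?_
    refine (SP_iter_mono P (Nat.le_succ k)).trans ?_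
    change (SP P)^[k + 1] ∅ ⊆ _
    rw [Function.iterate_succ_apply']
    exact SP_mono' P (Set.subset_iUnion (fun k => (SP P)^[k] ∅) k)

/-- The denotation of the least fixpoint of the symbolic operator `S_P`
(obtained as the union of its iterates from `∅`) is the least fixpoint of `T_P`. -/
theorem den_lfp_SP_eq_lfp_TP (P : LOProgram σ) :
    IsLeast { I : Set (LOFact σ) | TP P I = I } (den (⋃ k, (SP P)^[k] ∅)) := by
  refine ⟨?_, ?_⟩
  · change TP P _ = _
    rw [TP_den, SP_union]
  · intro J hJ
    have hJ' : TP P J = J := hJ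
    have key : ∀ k, den ((SP P)^[k] ∅) ⊆ J := by
      intro k
      induction k with
      | zero =>
        rintro M ⟨A, hA, _⟩
        exact absurd hA (Set.notMem_empty A)
      | succ k ih =>
        rw [Function.iterate_succ_apply', ← TP_den, ← hJ']
        exact TP_mono' P ih
    rintro M ⟨A, hA, hle⟩
    obtain ⟨k, hk⟩ := Set.mem_iUnion.mp hA
    exact key k ⟨A, hk, hle⟩
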